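/- Let α ∈ (0,1), γ > 0, and let (α_m)_{m≥0} be a real sequence with α_0 ∈ [0,1] satisfying the recursion α_{m+1} = α_m + γ·(α − err_m), where each err_m ∈ {0,1} satisfies err_m = 0 whenever α_m ≤ 0 and err_m = 1 whenever α_m ≥ 1. Then α_m ∈ [−γ, 1+γ] for every m ≥ 0. -/

import Mathlib

/-!
Outside `[0, 1]` the feedback is saturated, so that the update points back towards the interval.
As a single step has size at most `γ`, the iterates overshoot either endpoint by at most `γ`.
-/

section InwardSteps

variable {G : Type*} [AddCommGroup G] [LinearOrder G] [IsOrderedAddMonoid G]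
  {a : ℕ → G} {l u c : G}

lemma sub_le_of_le_succ_below (h_init : l - c ≤ a 0)
    (h_step : ∀ m, a m - c ≤ a (m + 1)) (h_below : ∀ m, a m < l → a m ≤ a (m + 1)) (m : ℕ) :
    l - c ≤ a m := by
  induction m with
  | zero => exact h_init
  | succ m ih =>
    rcases lt_or_ge (a m) l with h_lt | h_ge
    · exact ih.trans (h_below m h_lt)
    · exact (sub_le_sub_right h_ge c).trans (h_step m)

lemma le_add_of_succ_le_above (h_init : a 0 ≤ u + c)
    (h_step : ∀ m, a (m + 1) ≤ a m + c) (h_above : ∀ m, u < a m → a (m + 1) ≤ a m) (m : ℕ) :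
    a m ≤ u + c := by
  have h_neg : -u - c ≤ -a m :=
    sub_le_of_le_succ_below (a := fun m ↦ -a m)
      (by simpa only [neg_add'] using neg_le_neg h_init)
      (fun m ↦ by simpa only [neg_add'] using neg_le_neg (h_step m))
      (fun m h ↦ neg_le_neg (h_above m (neg_lt_neg_iff.mp h))) m
  simpa only [← neg_add', neg_le_neg_iff] using h_neg

lemma mem_Icc_of_inward_steps (h_init : a 0 ∈ Set.Icc (l - c) (u + c))
    (h_step : ∀ m, |a (m + 1) - a m| ≤ c) (h_below : ∀ m, a m < l → a m ≤ a (m + 1))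
    (h_above : ∀ m, u < a m → a (m + 1) ≤ a m) (m : ℕ) :
    a m ∈ Set.Icc (l - c) (u + c) :=
  ⟨sub_le_of_le_succ_below h_init.1
      (fun m ↦ sub_le_of_abs_sub_le_left (h_step m)) h_below m,
    le_add_of_succ_le_above h_init.2
      (fun m ↦ sub_le_iff_le_add'.mp (le_of_abs_le (h_step m))) h_above m⟩

end InwardSteps

theorem aci_iterates_bounded_general {R : Type*} [Ring R] [LinearOrder R] [IsOrderedRing R]
    {α γ : R} (hα : α ∈ Set.Icc 0 1) (hγ : 0 ≤ γ) {a err : ℕ → R}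
    (h_init : a 0 ∈ Set.Icc (-γ) (1 + γ)) (herr : ∀ m, err m ∈ Set.Icc 0 1)
    (herr_below : ∀ m, a m < 0 → err m = 0) (herr_above : ∀ m, 1 < a m → err m = 1)
    (hrec : ∀ m, a (m + 1) = a m + γ * (α - err m)) (m : ℕ) :
    a m ∈ Set.Icc (-γ) (1 + γ) := by
  have h_step (m : ℕ) : |a (m + 1) - a m| ≤ γ := by
    have h_gap : |α - err m| ≤ 1 :=
      abs_sub_le_of_nonneg_of_le hα.1 hα.2 (herr m).1 (herr m).2
    rw [hrec, add_sub_cancel_left, abs_mul, abs_of_nonneg hγ]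
    exact mul_le_of_le_one_right hγ h_gap
  have h_below (m : ℕ) (h : a m < 0) : a m ≤ a (m + 1) := by
    rw [hrec, herr_below m h, sub_zero]
    exact le_add_of_nonneg_right (mul_nonneg hγ hα.1)
  have h_above (m : ℕ) (h : 1 < a m) : a (m + 1) ≤ a m := by
    rw [hrec, herr_above m h]
    exact add_le_of_nonpos_right (mul_nonpos_of_nonneg_of_nonpos hγ (sub_nonpos.mpr hα.2))
  rw [← zero_sub] at h_init ⊢
  exact mem_Icc_of_inward_steps h_init h_step h_below h_above m

/-- **Boundedness of the adaptive conformal inference iterates.**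
Let `α ∈ (0,1)`, `γ > 0`, and let `(α_m)` satisfy `α_{m+1} = α_m + γ (α - err_m)` with
`α_0 ∈ [0,1]`, where each `err_m ∈ {0,1}`, `err_m = 0` whenever `α_m ≤ 0` and `err_m = 1`
whenever `α_m ≥ 1`.  Then `α_m ∈ [-γ, 1 + γ]` for every `m`. -/
theorem aci_iterates_bounded (α γ : ℝ) (hα0 : 0 < α) (hα1 : α < 1) (hγ : 0 < γ)
    (a : ℕ → ℝ) (err : ℕ → ℝ)
    (ha0 : a 0 ∈ Set.Icc (0 : ℝ) 1)
    (herr : ∀ m, err m = 0 ∨ err m = 1)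
    (herr0 : ∀ m, a m ≤ 0 → err m = 0)
    (herr1 : ∀ m, 1 ≤ a m → err m = 1)
    (hrec : ∀ m, a (m + 1) = a m + γ * (α - err m)) :
    ∀ m, a m ∈ Set.Icc (-γ) (1 + γ) := by
  have h_init : a 0 ∈ Set.Icc (-γ) (1 + γ) :=
    Set.Icc_subset_Icc (neg_nonpos.mpr hγ.le) (le_add_of_nonneg_right hγ.le) ha0
  have herr_mem (m : ℕ) : err m ∈ Set.Icc 0 1 := by
    rcases herr m with h | h <;> simp [h]
  exact aci_iterates_bounded_general ⟨hα0.le, hα1.le⟩ hγ.le h_init herr_mem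
    (fun m h ↦ herr0 m h.le) (fun m h ↦ herr1 m h.le) hrec
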